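/- arXiv:1608.02650 — 4 statements merged into one kernel-verified Lean document; each statement's English description precedes it below -/
import Mathlib

section
/- For any finite orthonormal family {|ψ_i⟩} of vectors in a finite-dimensional Hilbert space H_S, there exists a quantum channel Λ from operators on H_S to operators on H_{S1} ⊗ H_{S2} (with H_{S1} ≅ H_{S2} ≅ H_S) such that, for every probability distribution {p_i}, Λ[Σ_i p_i |ψ_i⟩⟨ψ_i|] = Σ_i p_i |ψ_i⟩⟨ψ_i| ⊗ |ψ_i⟩⟨ψ_i|. In particular, any state ρ_S = Σ_i p_i |ψ_i⟩⟨ψ_i| diagonal in a fixed orthonormal basis can be broadcast: the two marginals of Λ[ρ_S] both equal ρ_S. -/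
open Matrix Kronecker ComplexOrder

section Defs
variable {α α' β β' γ : Type*} [Fintype α] [DecidableEq α] [Fintype α'] [DecidableEq α']
  [Fintype β] [DecidableEq β] [Fintype β'] [DecidableEq β'] [Fintype γ] [DecidableEq γ]

/-- A density matrix: a positive semidefinite matrix with unit trace. -/
def IsDensityMatrix (ρ : Matrix β β ℂ) : Prop := ρ.PosSemidef ∧ ρ.trace = 1

/-- The map `id_α ⊗ Λ` induced on matrices over the product index type. -/
noncomputable def idTensor (Λ : Matrix β β ℂ →ₗ[ℂ] Matrix β' β' ℂ) :
    Matrix (α × β) (α × β) ℂ →ₗ[ℂ] Matrix (α × β') (α × β') ℂ where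
  toFun M := Matrix.of fun p q => Λ (Matrix.of fun b b' => M (p.1, b) (q.1, b')) p.2 q.2
  map_add' M N := by
    ext p q
    show Λ (Matrix.of fun b b' => (M + N) (p.1, b) (q.1, b')) p.2 q.2 = _
    have h : (Matrix.of fun b b' => (M + N) (p.1, b) (q.1, b')) =
        (Matrix.of fun b b' => M (p.1, b) (q.1, b')) +
          (Matrix.of fun b b' => N (p.1, b) (q.1, b')) := rfl
    rw [h, map_add]
    rfl
  map_smul' c M := by
    ext p q
    show Λ (Matrix.of fun b b' => (c • M) (p.1, b) (q.1, b')) p.2 q.2 = _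
    have h : (Matrix.of fun b b' => (c • M) (p.1, b) (q.1, b')) =
        c • (Matrix.of fun b b' => M (p.1, b) (q.1, b')) := rfl
    rw [h, _root_.map_smul]
    rfl

/-- Complete positivity: all extensions `id ⊗ Λ` preserve positive semidefiniteness. -/
def IsCompletelyPositive (Λ : Matrix β β ℂ →ₗ[ℂ] Matrix β' β' ℂ) : Prop :=
  ∀ (k : ℕ) (M : Matrix (Fin k × β) (Fin k × β) ℂ), M.PosSemidef → (idTensor Λ M).PosSemidef

/-- A quantum channel: a completely positive trace-preserving linear map. -/
def IsQuantumChannel (Λ : Matrix β β ℂ →ₗ[ℂ] Matrix β' β' ℂ) : Prop :=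
  IsCompletelyPositive Λ ∧ ∀ X, (Λ X).trace = X.trace

/-- Partial trace over the second tensor factor. -/
noncomputable def ptraceRight (M : Matrix (α × β) (α × β) ℂ) : Matrix α α ℂ :=
  Matrix.of fun a a' => ∑ b, M (a, b) (a', b)

/-- Partial trace over the first tensor factor. -/
noncomputable def ptraceLeft (M : Matrix (α × β) (α × β) ℂ) : Matrix β β ℂ :=
  Matrix.of fun b b' => ∑ a, M (a, b) (a, b')

end Defs


lemma idTensor_kraus_aux {α β β' : Type*} [Fintype α] [DecidableEq α] [Fintype β]
    [DecidableEq β] [Fintype β'] [DecidableEq β'] (K : Matrix β' β ℂ)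
    (M : Matrix (α × β) (α × β) ℂ) (p q : α × β') :
    (((1 : Matrix α α ℂ) ⊗ₖ K) * M * ((1 : Matrix α α ℂ) ⊗ₖ K)ᴴ) p q =
      (K * (Matrix.of fun b b' => M (p.1, b) (q.1, b')) * Kᴴ) p.2 q.2 := by
  simp [Matrix.mul_apply, Fintype.sum_prod_type, Matrix.one_apply, apply_ite star, ite_mul,
    mul_ite, Finset.sum_ite_irrel, Finset.sum_ite_eq]

/-- The linear map with given Kraus operators. -/
noncomputable def krausMap {ι β β' : Type*} [Fintype ι] [Fintype β] [Fintype β']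
    (K : ι → Matrix β' β ℂ) : Matrix β β ℂ →ₗ[ℂ] Matrix β' β' ℂ where
  toFun X := ∑ o, K o * X * (K o)ᴴ
  map_add' X Y := by simp [Matrix.mul_add, Matrix.add_mul, Finset.sum_add_distrib]
  map_smul' c X := by simp [Finset.smul_sum]

lemma krausMap_isQuantumChannel {ι β β' : Type*} [Fintype ι] [Fintype β] [DecidableEq β]
    [Fintype β'] [DecidableEq β']
    (K : ι → Matrix β' β ℂ) (hK : ∑ o, (K o)ᴴ * K o = 1) : IsQuantumChannel (krausMap K) := by
  constructor
  · intro k M hM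
    have h : idTensor (krausMap K) M =
        ∑ o, ((1 : Matrix (Fin k) (Fin k) ℂ) ⊗ₖ K o) * M * ((1 : Matrix (Fin k) (Fin k) ℂ) ⊗ₖ K o)ᴴ := by
      ext p q
      rw [Matrix.sum_apply]
      simp_rw [idTensor_kraus_aux]
      rw [← Matrix.sum_apply]
      rfl
    rw [h]
    exact Matrix.posSemidef_sum _ fun o _ => hM.mul_mul_conjTranspose_same _
  · intro X
    change (∑ o, K o * X * (K o)ᴴ).trace = _
    rw [Matrix.trace_sum]
    have : ∀ o, (K o * X * (K o)ᴴ).trace = ((K o)ᴴ * K o * X).trace := fun o => by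
      rw [Matrix.trace_mul_comm, Matrix.mul_assoc]
    simp_rw [this]
    rw [← Matrix.trace_sum, ← Finset.sum_mul, hK, Matrix.one_mul]

lemma conj_vecMulVec {β β' : Type*} [Fintype β] [Fintype β'] (K : Matrix β' β ℂ) (u : β → ℂ) :
    K * vecMulVec u (star u) * Kᴴ = vecMulVec (K *ᵥ u) (star (K *ᵥ u)) := by
  rw [Matrix.mul_vecMulVec, Matrix.vecMulVec_mul, Matrix.star_mulVec]

lemma ptraceRight_kron {n : Type*} [Fintype n] {k : ℕ} (c : Fin k → ℂ)
    (P : Fin k → Matrix n n ℂ) (hP : ∀ i, (P i).trace = 1) :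
    ptraceRight (∑ i, c i • (P i ⊗ₖ P i)) = ∑ i, c i • P i := by
  ext a b
  simp only [ptraceRight, Matrix.of_apply, Matrix.sum_apply, Matrix.smul_apply,
    Matrix.kroneckerMap_apply, smul_eq_mul]
  rw [Finset.sum_comm]
  refine Finset.sum_congr rfl fun i _ => ?_
  have := hP i
  simp only [Matrix.trace, Matrix.diag] at this
  rw [← Finset.mul_sum, ← Finset.mul_sum, this, mul_one]

lemma ptraceLeft_kron {n : Type*} [Fintype n] {k : ℕ} (c : Fin k → ℂ)
    (P : Fin k → Matrix n n ℂ) (hP : ∀ i, (P i).trace = 1) :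
    ptraceLeft (∑ i, c i • (P i ⊗ₖ P i)) = ∑ i, c i • P i := by
  ext a b
  simp only [ptraceLeft, Matrix.of_apply, Matrix.sum_apply, Matrix.smul_apply,
    Matrix.kroneckerMap_apply, smul_eq_mul]
  rw [Finset.sum_comm]
  refine Finset.sum_congr rfl fun i _ => ?_
  have := hP i
  simp only [Matrix.trace, Matrix.diag] at this
  rw [← Finset.mul_sum, ← Finset.sum_mul, this, one_mul]

/-- The copy isometry in the computational basis. -/
def copyIso (n : Type*) [DecidableEq n] : Matrix (n × n) n ℂ :=
  Matrix.of fun p c => if p.1 = c then (if p.2 = c then 1 else 0) else 0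

lemma copyIso_isometry (n : Type*) [Fintype n] [DecidableEq n] :
    (copyIso n)ᴴ * copyIso n = 1 := by
  ext a b
  simp [copyIso, Matrix.mul_apply, Fintype.sum_prod_type, Matrix.one_apply, apply_ite star,
    Finset.sum_ite_irrel]
  by_cases h : a = b
  · simp [h]
  · simp [h, Ne.symm h]

lemma krausMap_rank_one_aux {n : Type*} [Fintype n] [DecidableEq n] {k : ℕ}
    (ψ : Fin k → (n → ℂ))
    (hortho : ∀ i j, star (ψ i) ⬝ᵥ ψ j = if i = j then 1 else 0) :
    ∃ Λ : Matrix n n ℂ →ₗ[ℂ] Matrix (n × n) (n × n) ℂ, IsQuantumChannel Λ ∧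
      ∀ i, Λ (vecMulVec (ψ i) (star (ψ i))) =
        vecMulVec (ψ i) (star (ψ i)) ⊗ₖ vecMulVec (ψ i) (star (ψ i)) := by
  set φ : Fin k → (n × n → ℂ) := fun i p => ψ i p.1 * ψ i p.2 with hφ
  set S : Matrix n n ℂ := ∑ i, vecMulVec (ψ i) (star (ψ i)) with hS
  have hSψ : ∀ i, S *ᵥ ψ i = ψ i := fun i => by
    rw [hS, Matrix.sum_mulVec]
    simp [Matrix.vecMulVec_mulVec, hortho]
  have hSS : S * S = S := by
    conv_lhs => rw [hS]
    rw [← hS]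
    conv_lhs => enter [2]; rw [hS]
    rw [Finset.mul_sum]
    simp_rw [Matrix.mul_vecMulVec, hSψ]
    rfl
  have hSH : Sᴴ = S := by
    rw [hS, Matrix.conjTranspose_sum]
    simp [Matrix.conjTranspose_vecMulVec]
  have hφφ : ∀ i, star (φ i) ⬝ᵥ φ i = 1 := fun i => by
    have h := hortho i i
    simp only [if_true, dotProduct, Pi.star_apply] at h
    calc star (φ i) ⬝ᵥ φ i
        = (∑ x, star (ψ i x) * ψ i x) * (∑ x, star (ψ i x) * ψ i x) := by
          rw [Finset.sum_mul_sum, dotProduct, Fintype.sum_prod_type]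
          refine Finset.sum_congr rfl fun a _ => Finset.sum_congr rfl fun b _ => ?_
          simp only [hφ, Pi.star_apply, star_mul]
          ring
      _ = 1 := by rw [h, one_mul]
  let K : Option (Fin k) → Matrix (n × n) n ℂ := fun o =>
    o.elim (copyIso n * (1 - S)) (fun i => vecMulVec (φ i) (star (ψ i)))
  refine ⟨krausMap K, krausMap_isQuantumChannel K ?_, fun i => ?_⟩
  · rw [Fintype.sum_option]
    have h1 : (K none)ᴴ * K none = 1 - S := by
      change (copyIso n * (1 - S))ᴴ * (copyIso n * (1 - S)) = _
      rw [Matrix.conjTranspose_mul, Matrix.mul_assoc, ← Matrix.mul_assoc (copyIso n)ᴴ,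
        copyIso_isometry, Matrix.one_mul, Matrix.conjTranspose_sub, hSH,
        Matrix.conjTranspose_one, Matrix.mul_sub, Matrix.sub_mul, Matrix.sub_mul,
        hSS]
      simp
    have h2 : ∀ i, (K (some i))ᴴ * K (some i) = vecMulVec (ψ i) (star (ψ i)) := fun i => by
      change (vecMulVec (φ i) (star (ψ i)))ᴴ * vecMulVec (φ i) (star (ψ i)) = _
      rw [Matrix.conjTranspose_vecMulVec, Matrix.vecMulVec_mul_vecMulVec, hφφ, star_star]
      simp
    simp_rw [h1, h2]
    rw [← hS, sub_add_cancel]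
  · change ∑ o, K o * vecMulVec (ψ i) (star (ψ i)) * (K o)ᴴ = _
    simp_rw [conj_vecMulVec]
    rw [Fintype.sum_option]
    have h1 : K none *ᵥ ψ i = 0 := by
      change (copyIso n * (1 - S)) *ᵥ ψ i = 0
      rw [← Matrix.mulVec_mulVec, Matrix.sub_mulVec, hSψ]
      simp
    have h2 : ∀ j, K (some j) *ᵥ ψ i = if j = i then φ i else 0 := fun j => by
      change vecMulVec (φ j) (star (ψ j)) *ᵥ ψ i = _
      rw [Matrix.vecMulVec_mulVec, hortho]
      split_ifs with h
      · subst h; simp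
      · simp
    simp_rw [h1, h2]
    rw [Finset.sum_eq_single i (fun j _ hj => by simp [hj]) (by simp)]
    ext p q
    simp [Matrix.vecMulVec_apply, hφ]
    ring

/-- For any finite orthonormal family `{|ψᵢ⟩}` there is a quantum channel `Λ` that
broadcasts every state diagonal in that family: for every probability distribution `{pᵢ}`,
`Λ[∑ᵢ pᵢ |ψᵢ⟩⟨ψᵢ|] = ∑ᵢ pᵢ |ψᵢ⟩⟨ψᵢ| ⊗ |ψᵢ⟩⟨ψᵢ|`, and in particular both marginals of the
output equal the input state. -/
theorem broadcast_of_diagonal_states {n : Type*} [Fintype n] [DecidableEq n] {k : ℕ}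
    (ψ : Fin k → (n → ℂ))
    (hortho : ∀ i j, star (ψ i) ⬝ᵥ ψ j = if i = j then 1 else 0) :
    ∃ Λ : Matrix n n ℂ →ₗ[ℂ] Matrix (n × n) (n × n) ℂ, IsQuantumChannel Λ ∧
      ∀ p : Fin k → ℝ, (∀ i, 0 ≤ p i) → ∑ i, p i = 1 →
        (Λ (∑ i, (p i : ℂ) • vecMulVec (ψ i) (star (ψ i))) =
            ∑ i, (p i : ℂ) •
              (vecMulVec (ψ i) (star (ψ i)) ⊗ₖ vecMulVec (ψ i) (star (ψ i))) ∧
          ptraceRight (Λ (∑ i, (p i : ℂ) • vecMulVec (ψ i) (star (ψ i)))) =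
            ∑ i, (p i : ℂ) • vecMulVec (ψ i) (star (ψ i)) ∧
          ptraceLeft (Λ (∑ i, (p i : ℂ) • vecMulVec (ψ i) (star (ψ i)))) =
            ∑ i, (p i : ℂ) • vecMulVec (ψ i) (star (ψ i))) := by
  obtain ⟨Λ, hΛ, h⟩ := krausMap_rank_one_aux ψ hortho
  refine ⟨Λ, hΛ, fun p _ _ => ?_⟩
  have hm : Λ (∑ i, (p i : ℂ) • vecMulVec (ψ i) (star (ψ i))) =
      ∑ i, (p i : ℂ) •
        (vecMulVec (ψ i) (star (ψ i)) ⊗ₖ vecMulVec (ψ i) (star (ψ i))) := by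
    simp_rw [map_sum, _root_.map_smul, h]
  have ht : ∀ i, (vecMulVec (ψ i) (star (ψ i))).trace = 1 := fun i => by
    rw [Matrix.trace_vecMulVec, dotProduct_comm, hortho, if_pos rfl]
  refine ⟨hm, ?_, ?_⟩
  · rw [hm]; exact ptraceRight_kron _ _ ht
  · rw [hm]; exact ptraceLeft_kron _ _ ht
end

section
/- A finite collection of density matrices {ρ_k} on a finite-dimensional Hilbert space can all be broadcast by one and the same quantum channel Λ: S → S₁S₂ if and only if they pairwise commute, [ρ_j, ρ_k] = 0 for all j, k. -/
open Matrix Kronecker ComplexOrder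

section Helpers
variable {n m : Type*} [Fintype n] [DecidableEq n] [Fintype m] [DecidableEq m]

/-- A zero diagonal entry of a positive semidefinite matrix kills its column. -/
lemma psd_col_zero {R : Matrix n n ℂ} (hR : R.PosSemidef) {a : n} (ha : R a a = 0) (b : n) :
    R b a = 0 := by
  have h := (hR.dotProduct_mulVec_zero_iff (Pi.single a 1)).1 (by simp [ha])
  have := congrFun h b
  simpa using this

lemma psd_mul_zero {N : Matrix m m ℂ} (hN : N.PosSemidef) {T : Matrix m n ℂ}
    (h : (Tᴴ * N * T).trace = 0) : N * T = 0 := by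
  have h0 := ((hN.conjTranspose_mul_mul_same T).trace_eq_zero_iff).1 h
  ext p q
  have h1 := (hN.dotProduct_mulVec_zero_iff (fun i => T i q)).1 (by
    have h2 := congrFun (congrFun h0 q) q
    rw [Matrix.mul_assoc] at h2
    exact h2)
  exact congrFun h1 p

/-- Solvability of the symmetric logarithmic derivative equation. -/
lemma exists_sld {ρ τ : Matrix n n ℂ} (hρ : ρ.PosSemidef) (hτ : τ.PosSemidef) :
    ∃ L : Matrix n n ℂ, Lᴴ = L ∧ L * (ρ + τ) + (ρ + τ) * L = (2 : ℂ) • ρ := by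
  have hσ := hρ.add hτ
  set σ := ρ + τ with hσdef
  set U : Matrix n n ℂ := (hσ.1.eigenvectorUnitary : Matrix n n ℂ) with hU
  have hU1 : Uᴴ * U = 1 := Matrix.UnitaryGroup.star_mul_self hσ.1.eigenvectorUnitary
  have hU2 : U * Uᴴ = 1 := mul_eq_one_comm.1 hU1
  set s := hσ.1.eigenvalues with hs
  have hs0 : ∀ a, 0 ≤ s a := hσ.eigenvalues_nonneg
  have hspec : σ = U * diagonal (fun a => (s a : ℂ)) * Uᴴ := hσ.1.spectral_theorem
  set R := Uᴴ * ρ * U with hR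
  have hRp : R.PosSemidef := hρ.conjTranspose_mul_mul_same U
  have hTp : (Uᴴ * τ * U).PosSemidef := hτ.conjTranspose_mul_mul_same U
  have hsum : R + Uᴴ * τ * U = diagonal (fun a => (s a : ℂ)) := by
    rw [hR, ← Matrix.add_mul, ← Matrix.mul_add, ← hσdef, hspec]
    simp only [Matrix.mul_assoc, hU1, Matrix.mul_one]
    rw [← Matrix.mul_assoc, hU1, Matrix.one_mul]
  have hρR : ρ = U * R * Uᴴ := by
    rw [hR]
    simp only [Matrix.mul_assoc, hU2, Matrix.mul_one]
    rw [← Matrix.mul_assoc, hU2, Matrix.one_mul]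
  have hdiag : ∀ a, s a = 0 → R a a = 0 := by
    intro a ha
    have h := congrFun (congrFun hsum a) a
    simp only [Matrix.add_apply, diagonal_apply_eq, ha, Complex.ofReal_zero] at h
    exact (add_eq_zero_iff_of_nonneg (hRp.diag_nonneg) (hTp.diag_nonneg)).1 h |>.1
  let L' : Matrix n n ℂ := of fun a b => 2 * R a b / ((s a : ℂ) + s b)
  have hL' : L'ᴴ = L' := by
    ext a b
    have := congrFun (congrFun hRp.1 a) b
    simp only [conjTranspose_apply] at this
    simp [L', conjTranspose_apply, ← this, add_comm]
  have hLy : L' * diagonal (fun a => (s a : ℂ)) + diagonal (fun a => (s a : ℂ)) * L'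
      = (2 : ℂ) • R := by
    ext a b
    simp only [Matrix.add_apply, mul_diagonal, diagonal_mul, Matrix.smul_apply, L', of_apply,
      smul_eq_mul]
    by_cases h : s a + s b = 0
    · have hb : s b = 0 := by linarith [hs0 a, hs0 b]
      rw [psd_col_zero hRp (hdiag b hb) a]; simp
    · have h' : (s a : ℂ) + s b ≠ 0 := by exact_mod_cast h
      field_simp
      ring
  refine ⟨U * L' * Uᴴ, by simp [Matrix.mul_assoc, hL'], ?_⟩
  rw [hspec]
  have e1 : ∀ X Y : Matrix n n ℂ, (U * X * Uᴴ) * (U * Y * Uᴴ) = U * (X * Y) * Uᴴ := by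
    intro X Y
    calc _ = U * X * (Uᴴ * U) * Y * Uᴴ := by simp only [Matrix.mul_assoc]
      _ = _ := by rw [hU1]; simp only [Matrix.mul_assoc, Matrix.one_mul]
  rw [e1, e1, ← Matrix.add_mul, ← Matrix.mul_add, hLy, hρR]
  simp

/-- The equality case of monotonicity. -/
lemma channel_equality {Λ : Matrix n n ℂ →ₗ[ℂ] Matrix m m ℂ} (hΛ : IsQuantumChannel Λ)
    {σ L : Matrix n n ℂ} (hσ : σ.PosSemidef) (hL : Lᴴ = L) {A : Matrix m m ℂ} (hA : Aᴴ = A)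
    (h : (L * σ * L).trace - (Λ (L * σ) * A).trace - (A * Λ (σ * L)).trace
      + (A * Λ σ * A).trace = 0) : Λ (σ * L) = Λ σ * A := by
  have hLe : ∀ a b, (starRingEnd ℂ) (L a b) = L b a := fun a b => congrFun (congrFun hL b) a
  have hAe : ∀ a b, (starRingEnd ℂ) (A a b) = A b a := fun a b => congrFun (congrFun hA b) a
  let V : Matrix (Fin 2 × n) n ℂ := of fun p b => if p.1 = 0 then L p.2 b else (1 : Matrix n n ℂ) p.2 b
  let T : Matrix (Fin 2 × m) m ℂ := of fun p b => if p.1 = 0 then (1 : Matrix m m ℂ) p.2 b else - A p.2 b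
  have hM := hσ.mul_mul_conjTranspose_same V
  have hN := hΛ.1 2 _ hM
  set N := idTensor (α := Fin 2) Λ (V * σ * Vᴴ) with hNdef
  have b00 : (of fun b b' => (V * σ * Vᴴ) ((0 : Fin 2), b) ((0 : Fin 2), b')) = L * σ * L := by
    ext b b'
    simp [V, Matrix.mul_apply, conjTranspose_apply]
    refine Finset.sum_congr rfl fun x _ => ?_
    rw [hLe]
  have b01 : (of fun b b' => (V * σ * Vᴴ) ((0 : Fin 2), b) ((1 : Fin 2), b')) = L * σ := by
    ext b b'
    simp [V, Matrix.mul_apply, conjTranspose_apply, Matrix.one_apply]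
  have b10 : (of fun b b' => (V * σ * Vᴴ) ((1 : Fin 2), b) ((0 : Fin 2), b')) = σ * L := by
    ext b b'
    simp [V, Matrix.mul_apply, conjTranspose_apply, Matrix.one_apply]
    refine Finset.sum_congr rfl fun x _ => ?_
    rw [hLe]
  have b11 : (of fun b b' => (V * σ * Vᴴ) ((1 : Fin 2), b) ((1 : Fin 2), b')) = σ := by
    ext b b'
    simp [V, Matrix.mul_apply, conjTranspose_apply, Matrix.one_apply]
  have n00 : ∀ p q, N (0, p) (0, q) = Λ (L * σ * L) p q := fun p q => by rw [← b00]; rfl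
  have n01 : ∀ p q, N (0, p) (1, q) = Λ (L * σ) p q := fun p q => by rw [← b01]; rfl
  have n10 : ∀ p q, N (1, p) (0, q) = Λ (σ * L) p q := fun p q => by rw [← b10]; rfl
  have n11 : ∀ p q, N (1, p) (1, q) = Λ σ p q := fun p q => by
    conv_rhs => rw [← b11]
    rfl
  have t0 : ∀ p q, (N * T) (0, p) q = (Λ (L * σ * L) - Λ (L * σ) * A) p q := by
    intro p q
    simp [T, Matrix.mul_apply, Fintype.sum_prod_type, n00, n01, Matrix.one_apply, sub_eq_add_neg]
  have t1 : ∀ p q, (N * T) (1, p) q = (Λ (σ * L) - Λ σ * A) p q := by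
    intro p q
    simp [T, Matrix.mul_apply, Fintype.sum_prod_type, n10, n11, Matrix.one_apply, sub_eq_add_neg]
  have t2 : Tᴴ * N * T = (Λ (L * σ * L) - Λ (L * σ) * A) - A * (Λ (σ * L) - Λ σ * A) := by
    rw [Matrix.mul_assoc]
    ext p q
    rw [Matrix.mul_apply, Fintype.sum_prod_type, Fin.sum_univ_two]
    simp only [t0, t1]
    conv_rhs => rw [Matrix.sub_apply, Matrix.mul_apply]
    simp [T, conjTranspose_apply, Matrix.one_apply, sub_eq_add_neg, hAe]
  have hz : N * T = 0 := by
    apply psd_mul_zero hN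
    rw [t2]
    rw [← hΛ.2] at h
    simp only [Matrix.mul_sub, Matrix.trace_sub, ← Matrix.mul_assoc] at h ⊢
    rw [← h]; ring
  ext p q
  have := t1 p q
  rw [hz] at this
  exact (sub_eq_zero.1 this.symm)

lemma ptraceRight_trace_mul (S : Matrix (n × n) (n × n) ℂ) (X : Matrix n n ℂ) :
    (S * (X ⊗ₖ (1 : Matrix n n ℂ))).trace = (ptraceRight S * X).trace := by
  simp only [Matrix.trace, Matrix.diag, Matrix.mul_apply, ptraceRight, Fintype.sum_prod_type,
    kroneckerMap_apply, Matrix.one_apply, of_apply, mul_ite, mul_one, mul_zero,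
    Finset.sum_ite_eq', Finset.mem_univ, if_true, Finset.sum_mul]
  refine Finset.sum_congr rfl fun x _ => ?_
  exact Finset.sum_comm

lemma ptraceLeft_trace_mul (S : Matrix (n × n) (n × n) ℂ) (X : Matrix n n ℂ) :
    (S * ((1 : Matrix n n ℂ) ⊗ₖ X)).trace = (ptraceLeft S * X).trace := by
  have h2 : ∀ a b, (S * ((1 : Matrix n n ℂ) ⊗ₖ X)) (a, b) (a, b) = ∑ c, S (a, b) (a, c) * X c b := by
    intro a b
    rw [Matrix.mul_apply, Fintype.sum_prod_type, Finset.sum_eq_single a]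
    · simp [kroneckerMap_apply]
    · intro c _ hc; simp [kroneckerMap_apply, Matrix.one_apply_ne hc]
    · simp
  simp only [Matrix.trace, Matrix.diag, Fintype.sum_prod_type, h2]
  simp only [Matrix.mul_apply, ptraceLeft, of_apply, Finset.sum_mul]
  rw [Finset.sum_comm]
  refine Finset.sum_congr rfl fun x _ => ?_
  exact Finset.sum_comm

lemma ptraceRight_mul_right (S : Matrix (n × n) (n × n) ℂ) (X : Matrix n n ℂ) :
    ptraceRight (S * (X ⊗ₖ (1 : Matrix n n ℂ))) = ptraceRight S * X := by
  ext a a'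
  simp only [Matrix.mul_apply, ptraceRight, Fintype.sum_prod_type,
    kroneckerMap_apply, Matrix.one_apply, of_apply, mul_ite, mul_one, mul_zero,
    Finset.sum_ite_eq', Finset.mem_univ, if_true, Finset.sum_mul]
  exact Finset.sum_comm

lemma ptraceRight_mul_left (S : Matrix (n × n) (n × n) ℂ) (X : Matrix n n ℂ) :
    ptraceRight ((X ⊗ₖ (1 : Matrix n n ℂ)) * S) = X * ptraceRight S := by
  ext a a'
  simp only [Matrix.mul_apply, ptraceRight, Fintype.sum_prod_type,
    kroneckerMap_apply, Matrix.one_apply, of_apply, mul_ite, mul_one, mul_zero, ite_mul, zero_mul,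
    Finset.sum_ite_eq, Finset.mem_univ, if_true, Finset.mul_sum]
  exact Finset.sum_comm

lemma ptraceRight_cyclic (S : Matrix (n × n) (n × n) ℂ) (X : Matrix n n ℂ) :
    ptraceRight (((1 : Matrix n n ℂ) ⊗ₖ X) * S) = ptraceRight (S * ((1 : Matrix n n ℂ) ⊗ₖ X)) := by
  ext a a'
  have h1 : ∀ b, (((1 : Matrix n n ℂ) ⊗ₖ X) * S) (a, b) (a', b) = ∑ c, X b c * S (a, c) (a', b) := by
    intro b
    rw [Matrix.mul_apply, Fintype.sum_prod_type, Finset.sum_eq_single a]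
    · simp [kroneckerMap_apply]
    · intro c _ hc; simp [kroneckerMap_apply, Matrix.one_apply_ne hc.symm]
    · simp
  have h2 : ∀ b, (S * ((1 : Matrix n n ℂ) ⊗ₖ X)) (a, b) (a', b) = ∑ c, S (a, b) (a', c) * X c b := by
    intro b
    rw [Matrix.mul_apply, Fintype.sum_prod_type, Finset.sum_eq_single a']
    · simp [kroneckerMap_apply]
    · intro c _ hc; simp [kroneckerMap_apply, Matrix.one_apply_ne hc]
    · simp
  simp only [ptraceRight, of_apply, h1, h2]
  rw [Finset.sum_comm]
  simp only [mul_comm]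

lemma broadcast_commute_aux {Λ : Matrix n n ℂ →ₗ[ℂ] Matrix (n × n) (n × n) ℂ}
    (hΛ : IsQuantumChannel Λ) {ρ τ : Matrix n n ℂ} (hρ : ρ.PosSemidef) (hτ : τ.PosSemidef)
    (h1 : ptraceRight (Λ ρ) = ρ ∧ ptraceLeft (Λ ρ) = ρ)
    (h2 : ptraceRight (Λ τ) = τ ∧ ptraceLeft (Λ τ) = τ) : ρ * τ = τ * ρ := by
  obtain ⟨L, hL, hLy⟩ := exists_sld hρ hτ
  have hσ := hρ.add hτ
  have s1 : ptraceRight (Λ (ρ + τ)) = ρ + τ := by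
    conv_rhs => rw [← h1.1, ← h2.1]
    ext a b
    simp [ptraceRight, Finset.sum_add_distrib]
  have s2 : ptraceLeft (Λ (ρ + τ)) = ρ + τ := by
    conv_rhs => rw [← h1.2, ← h2.2]
    ext a b
    simp [ptraceLeft, Finset.sum_add_distrib]
  set σ := ρ + τ with hσdef
  have key : ∀ A : Matrix (n × n) (n × n) ℂ, Aᴴ = A → (Λ ρ * A).trace = (ρ * L).trace →
      (Λ σ * (A * A)).trace = (σ * (L * L)).trace → Λ (σ * L) = Λ σ * A := by
    intro A hA hA1 hA2
    apply channel_equality hΛ hσ hL hA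
    have e1 : (Λ (L * σ) * A).trace + (A * Λ (σ * L)).trace = 2 * (ρ * L).trace := by
      rw [Matrix.trace_mul_comm A, ← Matrix.trace_add, ← Matrix.add_mul, ← map_add, hLy]
      simp [hA1]
    have e2 : (A * Λ σ * A).trace = (σ * (L * L)).trace := by
      rw [← hA2, Matrix.mul_assoc, Matrix.trace_mul_comm, Matrix.mul_assoc]
    have e3 : (L * σ * L).trace = (σ * (L * L)).trace := by
      rw [Matrix.mul_assoc, Matrix.trace_mul_comm, Matrix.mul_assoc]
    have e4 : 2 * (ρ * L).trace = 2 * (σ * (L * L)).trace := by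
      have : ((2 : ℂ) • ρ * L).trace = (L * σ * L).trace + (σ * L * L).trace := by
        rw [← hLy, Matrix.add_mul, Matrix.trace_add]
      rw [e3, Matrix.mul_assoc σ] at this
      simp only [Matrix.smul_mul, Matrix.trace_smul, smul_eq_mul] at this
      rw [this]; ring
    rw [e2, e3]
    linear_combination -e1 - e4
  have k1 := key (L ⊗ₖ 1) (by rw [conjTranspose_kronecker, hL]; simp)
    (by rw [ptraceRight_trace_mul, h1.1])
    (by rw [← mul_kronecker_mul, Matrix.one_mul, ptraceRight_trace_mul, s1])
  have k2 := key (1 ⊗ₖ L) (by rw [conjTranspose_kronecker, hL]; simp)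
    (by rw [ptraceLeft_trace_mul, h1.2])
    (by rw [← mul_kronecker_mul, Matrix.one_mul, ptraceLeft_trace_mul, s2])
  have hS : (Λ σ)ᴴ = Λ σ := by
    have := hΛ.1 1 (of fun p q => σ p.2 q.2) (hσ.submatrix Prod.snd)
    have := this.1
    ext p q
    exact congrFun (congrFun this (0, p)) (0, q)
  have k3 : Λ σ * (L ⊗ₖ 1) = Λ σ * (1 ⊗ₖ L) := k1.symm.trans k2
  have k4 : (L ⊗ₖ 1) * Λ σ = (1 ⊗ₖ L) * Λ σ := by
    have := congrArg conjTranspose k3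
    simpa [conjTranspose_mul, conjTranspose_kronecker, hL, hS] using this
  have hc : σ * L = L * σ := by
    calc σ * L = ptraceRight (Λ σ * (L ⊗ₖ 1)) := by rw [ptraceRight_mul_right, s1]
      _ = ptraceRight ((L ⊗ₖ 1) * Λ σ) := by rw [k3, k4, ptraceRight_cyclic]
      _ = L * σ := by rw [ptraceRight_mul_left, s1]
  have hρ2 : ρ = L * σ := by
    have : (2 : ℂ) • ρ = (2 : ℂ) • (L * σ) := by rw [← hLy, hc, two_smul]
    exact smul_right_injective _ two_ne_zero this
  have hcomm : ρ * σ = σ * ρ := by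
    rw [hρ2, ← Matrix.mul_assoc σ, hc]
  rw [hσdef, Matrix.mul_add, Matrix.add_mul] at hcomm
  exact add_left_cancel hcomm

lemma exists_joint_basis {E : Type*} [NormedAddCommGroup E] [InnerProductSpace ℂ E]
    [FiniteDimensional ℂ E] {k : ℕ} (T : Fin k → Module.End ℂ E) (hT : ∀ i, (T i).IsSymmetric)
    (hC : Pairwise (Function.onFun Commute T)) (hn : Module.finrank ℂ E = Fintype.card n) :
    ∃ b : OrthonormalBasis n ℂ E, ∀ c, ∃ γ : Fin k → ℂ, ∀ i, T i (b c) = γ i • b c := by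
  classical
  obtain ⟨V, hV, hO, hmem⟩ : ∃ V : (Fin k → ℂ) → Submodule ℂ E, DirectSum.IsInternal V ∧
      OrthogonalFamily ℂ (fun γ => V γ) (fun γ => (V γ).subtypeₗᵢ) ∧
      ∀ (γ : Fin k → ℂ) (x : E), x ∈ V γ → ∀ i, T i x = γ i • x :=
    ⟨fun γ => ⨅ j, (T j).eigenspace (γ j),
      LinearMap.IsSymmetric.directSum_isInternal_of_pairwise_commute hT hC,
      LinearMap.IsSymmetric.orthogonalFamily_iInf_eigenspaces hT,
      fun γ x h i => Module.End.mem_eigenspace_iff.1 ((Submodule.mem_iInf _).1 h i)⟩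
  have hV' := DirectSum.isInternal_ne_bot_iff.mpr hV
  have hfin : Finite {γ : Fin k → ℂ // V γ ≠ ⊥} :=
    WellFoundedGT.finite_ne_bot_of_iSupIndep hV.submodule_iSupIndep
  have := Fintype.ofFinite {γ : Fin k → ℂ // V γ ≠ ⊥}
  have hO' := hO.comp (Subtype.val_injective (p := fun γ : Fin k → ℂ => V γ ≠ ⊥))
  refine ⟨(hV'.subordinateOrthonormalBasis hn hO').reindex (Fintype.equivFin n).symm, fun c => ?_⟩
  have h := hV'.subordinateOrthonormalBasis_subordinate hn (Fintype.equivFin n c) hO'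
  rw [OrthonormalBasis.reindex_apply, Equiv.symm_symm]
  exact ⟨_, hmem _ _ h⟩

/-- Simultaneous unitary diagonalization of a commuting Hermitian family. -/
lemma simdiag {k : ℕ} (ρs : Fin k → Matrix n n ℂ) (hH : ∀ i, (ρs i).IsHermitian)
    (hc : ∀ i j, ρs i * ρs j = ρs j * ρs i) :
    ∃ U : Matrix n n ℂ, Uᴴ * U = 1 ∧ U * Uᴴ = 1 ∧
      ∀ i, ∃ d : n → ℂ, ρs i = U * diagonal d * Uᴴ := by
  classical
  let T : Fin k → Module.End ℂ (EuclideanSpace ℂ n) := fun i => (ρs i).toEuclideanLin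
  have hT : ∀ i, (T i).IsSymmetric := fun i => isSymmetric_toEuclideanLin_iff.mpr (hH i)
  have hC : Pairwise (Function.onFun Commute T) := by
    intro i j _
    show T i * T j = T j * T i
    ext1 x
    simp [T, toEuclideanLin, Matrix.toLpLin_apply, hc i j]
  obtain ⟨b, hb⟩ := exists_joint_basis T hT hC finrank_euclideanSpace
  choose γ hγ using hb
  let U : Matrix n n ℂ := of fun a c => b c a
  have hU1 : Uᴴ * U = 1 := by
    ext c d
    have h := orthonormal_iff_ite.1 b.orthonormal c d
    rw [Matrix.one_apply, ← h]
    simp [U, Matrix.mul_apply, conjTranspose_apply, PiLp.inner_apply, mul_comm]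
  have hU2 : U * Uᴴ = 1 := mul_eq_one_comm.1 hU1
  refine ⟨U, hU1, hU2, fun i => ⟨fun c => γ c i, ?_⟩⟩
  have h : ρs i * U = U * diagonal (fun c => γ c i) := by
    ext a c
    have := congrArg (fun v : EuclideanSpace ℂ n => v a) (hγ c i)
    simp [T, toEuclideanLin, Matrix.toLpLin_apply] at this
    rw [mul_diagonal, mul_comm]
    exact this
  rw [← h, Matrix.mul_assoc, hU2, Matrix.mul_one]

/-- Measure in the basis given by `U` and write the result twice. -/
noncomputable def copyMap (U : Matrix n n ℂ) : Matrix n n ℂ →ₗ[ℂ] Matrix (n × n) (n × n) ℂ where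
  toFun X := of fun p q => ∑ c, U p.1 c * U p.2 c * (Uᴴ * X * U) c c * (star (U q.1 c) * star (U q.2 c))
  map_add' X Y := by
    ext p q
    simp [Matrix.mul_add, Matrix.add_mul, mul_add, add_mul, Finset.sum_add_distrib]
  map_smul' r X := by
    ext p q
    simp only [Matrix.mul_smul, Matrix.smul_mul, Matrix.smul_apply, of_apply, smul_eq_mul,
      RingHom.id_apply, Finset.mul_sum]
    refine Finset.sum_congr rfl fun c _ => ?_
    ring

lemma copyMap_apply (U X : Matrix n n ℂ) (p q : n × n) : copyMap U X p q =
    ∑ c, U p.1 c * U p.2 c * (Uᴴ * X * U) c c * (star (U q.1 c) * star (U q.2 c)) := rfl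

lemma copyMap_ptraceRight {U : Matrix n n ℂ} (hU : Uᴴ * U = 1) (X : Matrix n n ℂ) :
    ptraceRight (copyMap U X) = U * diagonal (fun c => (Uᴴ * X * U) c c) * Uᴴ := by
  have hc : ∀ c, ∑ b, star (U b c) * U b c = 1 := fun c => by
    simpa [Matrix.mul_apply] using congrFun (congrFun hU c) c
  ext a a'
  rw [Matrix.mul_apply]
  simp only [ptraceRight, of_apply, copyMap_apply, mul_diagonal, conjTranspose_apply]
  rw [Finset.sum_comm]
  refine Finset.sum_congr rfl fun c _ => ?_
  generalize (Uᴴ * X * U) c c = x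
  calc _ = ∑ b, (U a c * x * star (U a' c)) * (star (U b c) * U b c) :=
        Finset.sum_congr rfl fun b _ => by ring
    _ = _ := by rw [← Finset.mul_sum, hc, mul_one]

lemma copyMap_ptraceLeft {U : Matrix n n ℂ} (hU : Uᴴ * U = 1) (X : Matrix n n ℂ) :
    ptraceLeft (copyMap U X) = U * diagonal (fun c => (Uᴴ * X * U) c c) * Uᴴ := by
  rw [← copyMap_ptraceRight hU]
  ext a a'
  simp only [ptraceRight, ptraceLeft, of_apply, copyMap_apply]
  refine Finset.sum_congr rfl fun b _ => Finset.sum_congr rfl fun c _ => ?_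
  ring

lemma copyMap_channel {U : Matrix n n ℂ} (hU : Uᴴ * U = 1) (hU2 : U * Uᴴ = 1) :
    IsQuantumChannel (copyMap U) := by
  constructor
  · intro k M hM
    let K : n → Matrix (Fin k × (n × n)) (Fin k × n) ℂ := fun c =>
      of fun p q => if p.1 = q.1 then U p.2.1 c * U p.2.2 c * star (U q.2 c) else 0
    have : idTensor (α := Fin k) (copyMap U) M = ∑ c, K c * M * (K c)ᴴ := by
      ext p q
      rw [Matrix.sum_apply]
      show copyMap U _ _ _ = _
      rw [copyMap_apply]
      refine Finset.sum_congr rfl fun c _ => ?_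
      simp only [Matrix.mul_apply, K, of_apply, conjTranspose_apply, Fintype.sum_prod_type,
        ite_mul, zero_mul, apply_ite star, star_zero, mul_ite, mul_zero, Finset.sum_ite_irrel,
        Finset.sum_const_zero, Finset.sum_ite_eq, Finset.mem_univ, if_true, star_mul', star_star,
        Finset.sum_mul, Finset.mul_sum]
      refine Finset.sum_congr rfl fun b _ => Finset.sum_congr rfl fun b' _ => ?_
      ring
    rw [this]
    exact posSemidef_sum _ fun c _ => hM.mul_mul_conjTranspose_same (K c)
  · intro X
    have h : ∀ S : Matrix (n × n) (n × n) ℂ, S.trace = (ptraceRight S).trace := by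
      intro S
      simp [Matrix.trace, ptraceRight, Fintype.sum_prod_type]
    rw [h, copyMap_ptraceRight hU, Matrix.trace_mul_comm, ← Matrix.mul_assoc, hU, Matrix.one_mul,
      Matrix.trace_diagonal]
    show (Uᴴ * X * U).trace = _
    rw [Matrix.trace_mul_comm, ← Matrix.mul_assoc, hU2, Matrix.one_mul]

end Helpers


/-- A finite collection of density matrices can all be broadcast by one and the same
quantum channel if and only if they pairwise commute. -/
theorem no_broadcasting_family {n : Type*} [Fintype n] [DecidableEq n] {k : ℕ}
    (ρs : Fin k → Matrix n n ℂ) (hρs : ∀ i, IsDensityMatrix (ρs i)) :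
    (∃ Λ : Matrix n n ℂ →ₗ[ℂ] Matrix (n × n) (n × n) ℂ, IsQuantumChannel Λ ∧
        ∀ i, ptraceRight (Λ (ρs i)) = ρs i ∧ ptraceLeft (Λ (ρs i)) = ρs i) ↔
      ∀ i j, ρs i * ρs j = ρs j * ρs i := by
  constructor
  · rintro ⟨Λ, hΛ, h⟩ i j
    exact broadcast_commute_aux hΛ (hρs i).1 (hρs j).1 (h i) (h j)
  · intro hc
    obtain ⟨U, hU1, hU2, hd⟩ := simdiag ρs (fun i => (hρs i).1.1) hc
    refine ⟨copyMap U, copyMap_channel hU1 hU2, fun i => ?_⟩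
    obtain ⟨d, hd⟩ := hd i
    have e : Uᴴ * ρs i * U = diagonal d := by
      rw [hd]
      simp only [Matrix.mul_assoc, hU1, Matrix.mul_one]
      rw [← Matrix.mul_assoc, hU1, Matrix.one_mul]
    rw [copyMap_ptraceRight hU1, copyMap_ptraceLeft hU1, e]
    simp only [diagonal_apply_eq]
    exact ⟨hd.symm, hd.symm⟩
end

section
/- (No-unilocal-broadcasting theorem) Let ρ_{AB} be a density matrix on H_A ⊗ H_B (finite-dimensional). There exists a quantum channel Γ: B → B₁B₂ (with H_{B1} ≅ H_{B2} ≅ H_B) such that ρ̃_{AB1B2} = (id_A ⊗ Γ)[ρ_{AB}] satisfies Tr_{B2}(ρ̃) = ρ_{AB} and Tr_{B1}(ρ̃) = ρ_{AB} if and only if ρ_{AB} is classical on B, i.e., ρ_{AB} = Σ_j p_j ρ_j^A ⊗ |b_j⟩⟨b_j| for some probability distribution {p_j}, density matrices ρ_j^A on H_A, and an orthonormal basis {|b_j⟩} of H_B. -/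
open Matrix Kronecker ComplexOrder

section Defs
variable {α α' β β' γ : Type*} [Fintype α] [DecidableEq α] [Fintype α'] [DecidableEq α']
  [Fintype β] [DecidableEq β] [Fintype β'] [DecidableEq β'] [Fintype γ] [DecidableEq γ]

/-- Partial trace over the third tensor factor of a tripartite system. -/
noncomputable def ptraceThird (M : Matrix (α × β × γ) (α × β × γ) ℂ) :
    Matrix (α × β) (α × β) ℂ :=
  Matrix.of fun p q => ∑ c, M (p.1, p.2, c) (q.1, q.2, c)

/-- Partial trace over the second tensor factor of a tripartite system. -/
noncomputable def ptraceSecond (M : Matrix (α × β × γ) (α × β × γ) ℂ) :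
    Matrix (α × γ) (α × γ) ℂ :=
  Matrix.of fun p q => ∑ b, M (p.1, b, p.2) (q.1, b, q.2)

/-- A bipartite state is classical on `B` if it has the form
`∑ⱼ pⱼ ρⱼ^A ⊗ |bⱼ⟩⟨bⱼ|` for an orthonormal basis `{|bⱼ⟩}` of `H_B`. -/
def ClassicalOnB (ρ : Matrix (α × β) (α × β) ℂ) : Prop :=
  ∃ (p : β → ℝ) (τ : β → Matrix α α ℂ) (bv : β → β → ℂ),
    (∀ j, 0 ≤ p j) ∧ (∑ j, p j = 1) ∧ (∀ j, IsDensityMatrix (τ j)) ∧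
    (∀ j j', star (bv j) ⬝ᵥ bv j' = if j = j' then 1 else 0) ∧
    ρ = ∑ j, (p j : ℂ) • (τ j ⊗ₖ vecMulVec (bv j) (star (bv j)))

end Defs

/-! ### Core algebra -/

open scoped MatrixOrder in
theorem nub_zero_of_trace {κ β : Type*} [Fintype κ] [Fintype β]
    {σ : Matrix β β ℂ} (hσ : σ.PosSemidef) (A : Matrix κ β ℂ)
    (h : trace (σ * (Aᴴ * A)) = 0) : A * σ = 0 := by
  classical
  obtain ⟨B, rfl⟩ : ∃ B : Matrix β β ℂ, σ = Bᴴ * B := by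
    exact CStarAlgebra.nonneg_iff_eq_star_mul_self.mp hσ.nonneg
  have h1 : trace ((B * Aᴴ)ᴴ * (B * Aᴴ)) = 0 := by
    rw [← h, conjTranspose_mul, conjTranspose_conjTranspose, Matrix.trace_mul_comm,
      Matrix.mul_assoc B, Matrix.trace_mul_comm B, Matrix.trace_mul_comm (Bᴴ * B)]
    simp only [Matrix.mul_assoc]
  rw [trace_conjTranspose_mul_self_eq_zero_iff] at h1
  have h2 : A * Bᴴ = 0 := by
    have := congrArg conjTranspose h1
    simpa using this
  rw [← Matrix.mul_assoc, h2, Matrix.zero_mul]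

theorem nub_key {κ β : Type*} [Fintype κ] [Fintype β] [DecidableEq β]
    (V : Matrix κ β ℂ) (π : Matrix β β ℂ → Matrix κ κ ℂ)
    (hmul : ∀ x y, π (x * y) = π x * π y) (hstar : ∀ x, π xᴴ = (π x)ᴴ)
    (hV : Vᴴ * V = 1) {σ : Matrix β β ℂ} (hσ : σ.PosSemidef)
    (hF : ∀ x, trace (V * σ * Vᴴ * π x) = trace (σ * x)) (x : Matrix β β ℂ)
    (h : trace (σ * (xᴴ * (Vᴴ * (π x * V)))) = trace (σ * (xᴴ * x))) :
    π x * (V * σ) = V * (x * σ) := by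
  have e : (π x * V - V * x) * σ = 0 := by
    apply nub_zero_of_trace hσ
    have h2 : trace (σ * (Vᴴ * ((π x)ᴴ * (V * x)))) = trace (σ * (xᴴ * x)) := by
      have := congrArg star h
      rw [← trace_conjTranspose, ← trace_conjTranspose] at this
      simp only [conjTranspose_mul, conjTranspose_conjTranspose, hσ.1.eq] at this
      rw [Matrix.trace_mul_comm, Matrix.trace_mul_comm (xᴴ * x)] at this
      simpa only [Matrix.mul_assoc] using this
    have h1 : trace (σ * (Vᴴ * ((π x)ᴴ * (π x * V)))) = trace (σ * (xᴴ * x)) := by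
      rw [← hF (xᴴ * x), hmul, hstar, Matrix.mul_assoc V, Matrix.mul_assoc V, Matrix.trace_mul_comm V]
      simp only [Matrix.mul_assoc]
    have h3 : σ * ((π x * V - V * x)ᴴ * (π x * V - V * x)) =
        σ * (Vᴴ * ((π x)ᴴ * (π x * V))) - σ * (Vᴴ * ((π x)ᴴ * (V * x)))
        - σ * (xᴴ * (Vᴴ * (π x * V))) + σ * (xᴴ * x) := by
      have : Vᴴ * (V * x) = x := by rw [← Matrix.mul_assoc, hV, Matrix.one_mul]
      simp only [conjTranspose_sub, conjTranspose_mul, Matrix.sub_mul, Matrix.mul_sub,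
        Matrix.mul_assoc, this]
      abel
    rw [h3, trace_add, trace_sub, trace_sub, h, h1, h2]
    ring
  rw [Matrix.sub_mul, sub_eq_zero] at e
  simpa only [Matrix.mul_assoc] using e

theorem nub_pinv {β : Type*} [Fintype β] [DecidableEq β]
    {σ : Matrix β β ℂ} (hσ : σ.PosSemidef) :
    ∃ t : Matrix β β ℂ, tᴴ = t ∧ t * σ = σ * t ∧ σ * (t * σ) = σ ∧ t * (σ * t) = t := by
  have hs := hσ.1.spectral_theorem
  set U := hσ.1.eigenvectorUnitary
  rw [Unitary.conjStarAlgAut_apply] at hs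
  set D : Matrix β β ℂ := diagonal (RCLike.ofReal ∘ hσ.1.eigenvalues) with hD
  set D' : Matrix β β ℂ := diagonal (fun i => ((hσ.1.eigenvalues i)⁻¹ : ℂ)) with hD'
  have hU : (star (U : Matrix β β ℂ)) * (U : Matrix β β ℂ) = 1 := Unitary.coe_star_mul_self U
  have key : ∀ X Y : Matrix β β ℂ, ((U : Matrix β β ℂ) * X * star (U : Matrix β β ℂ)) *
      ((U : Matrix β β ℂ) * Y * star (U : Matrix β β ℂ)) =
      (U : Matrix β β ℂ) * (X * Y) * star (U : Matrix β β ℂ) := by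
    intro X Y
    calc _ = (U : Matrix β β ℂ) * X * (star (U : Matrix β β ℂ) * (U : Matrix β β ℂ)) * Y
          * star (U : Matrix β β ℂ) := by simp only [Matrix.mul_assoc]
      _ = _ := by rw [hU]; simp only [Matrix.mul_assoc, Matrix.mul_one]
  refine ⟨(U : Matrix β β ℂ) * D' * star (U : Matrix β β ℂ), ?_, ?_, ?_, ?_⟩
  · have : D'ᴴ = D' := by
      rw [hD', diagonal_conjTranspose]; congr 1; ext i; simp
    simp only [conjTranspose_mul, star_eq_conjTranspose, conjTranspose_conjTranspose, this,
      Matrix.mul_assoc]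
  · rw [hs, key, key]
    congr 2
    rw [hD, hD', diagonal_mul_diagonal, diagonal_mul_diagonal]; congr 1; ext i; exact mul_comm _ _
  · conv_lhs => rw [hs]
    conv_rhs => rw [hs]
    rw [key, key]
    congr 2
    rw [hD, hD', diagonal_mul_diagonal, diagonal_mul_diagonal]; congr 1; ext i
    simp only [Function.comp]
    by_cases h0 : hσ.1.eigenvalues i = 0
    · simp [h0]
    · have : ((hσ.1.eigenvalues i : ℝ) : ℂ) ≠ 0 := by exact_mod_cast h0
      simp [this]
  · conv_lhs => rw [hs]
    rw [key, key]
    congr 2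
    rw [hD, hD', diagonal_mul_diagonal, diagonal_mul_diagonal]; congr 1; ext i
    simp only [Function.comp]
    by_cases h0 : hσ.1.eigenvalues i = 0
    · simp [h0]
    · have : ((hσ.1.eigenvalues i : ℝ) : ℂ) ≠ 0 := by exact_mod_cast h0
      simp [this]

/-- For Hermitian fixed `R`, `x = R t` and its adjoint intertwine. -/
theorem nub_intertwine {κ β : Type*} [Fintype κ] [Fintype β] [DecidableEq β]
    (V : Matrix κ β ℂ) (π : Matrix β β ℂ → Matrix κ κ ℂ)
    (hmul : ∀ x y, π (x * y) = π x * π y) (hstar : ∀ x, π xᴴ = (π x)ᴴ)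
    (hV : Vᴴ * V = 1) {σ t : Matrix β β ℂ} (hσ : σ.PosSemidef)
    (ht : tᴴ = t) (h1 : t * σ = σ * t) (h2 : σ * (t * σ) = σ) (h3 : t * (σ * t) = t)
    (hF : ∀ x, trace (V * σ * Vᴴ * π x) = trace (σ * x))
    (R : Matrix β β ℂ) (hR : Rᴴ = R) (hRP : R * (t * σ) = R)
    (hFR : ∀ x, trace (V * R * Vᴴ * π x) = trace (R * x)) :
    π (R * t) * (V * σ) = V * ((R * t) * σ) ∧ π (t * R) * (V * σ) = V * ((t * R) * σ) := by
  have hRP' : σ * (t * R) = R := by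
    have := congrArg conjTranspose hRP
    simpa only [conjTranspose_mul, hR, ht, hσ.1.eq, Matrix.mul_assoc] using this
  have a1 : π (R * t) * (V * σ) = V * ((R * t) * σ) := by
    apply nub_key V π hmul hstar hV hσ hF
    simp only [conjTranspose_mul, hR, ht]
    rw [← Matrix.mul_assoc σ, ← Matrix.mul_assoc σ, Matrix.mul_assoc σ t, hRP']
    simp only [Matrix.mul_assoc]
    rw [show σ * (t * (R * (R * t))) = (σ * (t * R)) * (R * t) by simp only [Matrix.mul_assoc],
      hRP', ← hFR (R * t), Matrix.mul_assoc V, Matrix.mul_assoc V, Matrix.trace_mul_comm V]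
    simp only [Matrix.mul_assoc]
  refine ⟨a1, ?_⟩
  apply nub_key V π hmul hstar hV hσ hF
  have a2 : Vᴴ * (π (R * t) * (V * σ)) = R * t * σ := by
    rw [a1, ← Matrix.mul_assoc, hV, Matrix.one_mul]
  have a3 : σ * (Vᴴ * (π (t * R) * V)) = σ * (t * R) := by
    have := congrArg conjTranspose a2
    simp only [conjTranspose_mul, conjTranspose_conjTranspose, hσ.1.eq, ← hstar, hR, ht] at this
    simpa only [Matrix.mul_assoc] using this
  -- σ x^* = σ R t = σ R t σ t
  have a4 : (t * R)ᴴ = R * t * t * σ := by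
    simp only [conjTranspose_mul, hR, ht, Matrix.mul_assoc]
    rw [h1, h3]
  rw [a4]
  simp only [Matrix.mul_assoc]
  rw [a3]

theorem nub_commute {κ β : Type*} [Fintype κ] [Fintype β] [DecidableEq β]
    (V : Matrix κ β ℂ) (π₁ π₂ : Matrix β β ℂ → Matrix κ κ ℂ)
    (hmul₁ : ∀ x y, π₁ (x * y) = π₁ x * π₁ y) (hstar₁ : ∀ x, π₁ xᴴ = (π₁ x)ᴴ)
    (hmul₂ : ∀ x y, π₂ (x * y) = π₂ x * π₂ y) (hstar₂ : ∀ x, π₂ xᴴ = (π₂ x)ᴴ)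
    (hcomm : ∀ x y, π₁ x * π₂ y = π₂ y * π₁ x)
    (hV : Vᴴ * V = 1) {σ : Matrix β β ℂ} (hσ : σ.PosSemidef)
    (hF₁ : ∀ x, trace (V * σ * Vᴴ * π₁ x) = trace (σ * x))
    (hF₂ : ∀ x, trace (V * σ * Vᴴ * π₂ x) = trace (σ * x))
    (S : Set (Matrix β β ℂ)) (hS : ∀ R ∈ S, Rᴴ = R)
    (hker : ∀ R ∈ S, ∀ Q, σ * Q = 0 → R * Q = 0)
    (hS₁ : ∀ R ∈ S, ∀ x, trace (V * R * Vᴴ * π₁ x) = trace (R * x))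
    (hS₂ : ∀ R ∈ S, ∀ x, trace (V * R * Vᴴ * π₂ x) = trace (R * x)) :
    ∀ R ∈ S, ∀ R' ∈ S, R * R' = R' * R := by
  obtain ⟨t, ht, h1, h2, h3⟩ := nub_pinv hσ
  have hRP : ∀ R ∈ S, R * (t * σ) = R := by
    intro R hR
    have : R * (1 - t * σ) = 0 := hker R hR _ (by rw [Matrix.mul_sub, h2]; simp)
    rw [Matrix.mul_sub, sub_eq_zero, Matrix.mul_one] at this
    exact this.symm
  have hRP' : ∀ R ∈ S, σ * (t * R) = R := by
    intro R hR
    have := congrArg conjTranspose (hRP R hR)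
    simpa only [conjTranspose_mul, hS R hR, ht, hσ.1.eq, Matrix.mul_assoc] using this
  -- general commutation
  have gen : ∀ x y : Matrix β β ℂ, π₁ x * (V * σ) = V * (x * σ) → π₂ y * (V * σ) = V * (y * σ) →
      σ * (t * x) = x → σ * (t * y) = y → y * (x * σ) = x * (y * σ) := by
    intro x y hx hy hx' hy'
    have e1 : π₂ y * (π₁ x * (V * σ)) = V * (y * (x * σ)) := by
      rw [hx]
      conv_lhs => rw [← hx', Matrix.mul_assoc σ, ← Matrix.mul_assoc V, ← Matrix.mul_assoc (π₂ y),
        hy]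
      conv_rhs => rw [← hx']
      simp only [Matrix.mul_assoc]
    have e2 : π₁ x * (π₂ y * (V * σ)) = V * (x * (y * σ)) := by
      rw [hy]
      conv_lhs => rw [← hy', Matrix.mul_assoc σ, ← Matrix.mul_assoc V, ← Matrix.mul_assoc (π₁ x),
        hx]
      conv_rhs => rw [← hy']
      simp only [Matrix.mul_assoc]
    rw [← Matrix.mul_assoc, hcomm, Matrix.mul_assoc, e1] at e2
    have := congrArg (fun z => Vᴴ * z) e2
    simpa only [← Matrix.mul_assoc, hV, Matrix.one_mul] using this
  have g1 := fun R hR => nub_intertwine V π₁ hmul₁ hstar₁ hV hσ ht h1 h2 h3 hF₁ R (hS R hR)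
    (hRP R hR) (hS₁ R hR)
  have g2 := fun R hR => nub_intertwine V π₂ hmul₂ hstar₂ hV hσ ht h1 h2 h3 hF₂ R (hS R hR)
    (hRP R hR) (hS₂ R hR)
  have sup1 : ∀ R ∈ S, σ * (t * (R * t)) = R * t := by
    intro R hR
    rw [← Matrix.mul_assoc t, ← Matrix.mul_assoc σ, hRP' R hR]
  have sup2 : ∀ R, σ * (t * (t * R)) = t * R := by
    intro R
    rw [← Matrix.mul_assoc σ, ← h1, Matrix.mul_assoc, ← Matrix.mul_assoc σ, ← Matrix.mul_assoc t,
      h3]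
  have rts : ∀ R ∈ S, R * t * σ = R := fun R hR => by rw [Matrix.mul_assoc, hRP R hR]
  -- R t = t R
  have self : ∀ R ∈ S, R * t = t * R := by
    intro R hR
    have c : (t * R) * ((R * t) * σ) = (R * t) * ((t * R) * σ) :=
      gen (R * t) (t * R) (g1 R hR).1 (g2 R hR).2 (sup1 R hR) (sup2 R)
    have hz : (R * t - t * R) * σ = 0 := by
      apply nub_zero_of_trace hσ
      have e : (R * t - t * R)ᴴ = t * R - R * t := by
        simp only [conjTranspose_sub, conjTranspose_mul, hS R hR, ht]
      rw [e, Matrix.trace_mul_comm]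
      have e' : (t * R - R * t) * (R * t - t * R) * σ =
          t * R * (R * t * σ) - t * R * (t * R * σ) - R * t * (R * t * σ)
            + R * t * (t * R * σ) := by
        simp only [Matrix.sub_mul, Matrix.mul_sub, Matrix.mul_assoc]
        abel
      rw [e', ← c, rts R hR, trace_add, trace_sub, trace_sub]
      have t1 : trace (t * R * (t * R * σ)) = trace (t * R * R) := by
        rw [← Matrix.mul_assoc, Matrix.trace_mul_comm, ← Matrix.mul_assoc, hRP' R hR,
          Matrix.trace_mul_comm]
      have t2 : trace (R * t * R) = trace (t * R * R) := by
        rw [Matrix.mul_assoc, Matrix.trace_mul_comm]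
      rw [t1, t2]; ring
    have := congrArg (fun z => z * t) hz
    simp only [Matrix.sub_mul, Matrix.zero_mul, Matrix.mul_assoc, h3] at this
    rw [← h1, hRP R hR] at this
    exact sub_eq_zero.mp this
  have sig : ∀ R ∈ S, R * σ = σ * R := by
    intro R hR
    conv_rhs => rw [← hRP R hR, ← Matrix.mul_assoc R, self R hR, ← Matrix.mul_assoc σ, hRP' R hR]
  intro R hR R' hR'
  have c := gen (R * t) (R' * t) (g1 R hR).1 (g2 R' hR').1 (sup1 R hR) (sup1 R' hR')
  rw [rts R hR, rts R' hR', self R hR, self R' hR'] at c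
  have := congrArg (fun z => σ * z) c
  simp only [← Matrix.mul_assoc] at this
  simp only [Matrix.mul_assoc σ, hRP' R hR, hRP' R' hR'] at this
  exact this.symm

/-! ### Stinespring form of a channel -/

open scoped MatrixOrder in
theorem nub_kraus {β β' : Type*} [Fintype β] [DecidableEq β] [Fintype β'] [DecidableEq β']
    (Γ : Matrix β β ℂ →ₗ[ℂ] Matrix β' β' ℂ) (hΓ : IsQuantumChannel Γ) :
    ∃ (V : Matrix ((Fin (Fintype.card β) × β') × β') β ℂ), Vᴴ * V = 1 ∧
      ∀ X p q, Γ X p q = ∑ s, (V * X * Vᴴ) (s, p) (s, q) := by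
  classical
  let e := Fintype.equivFin β
  let w : Fin (Fintype.card β) × β → ℂ := fun p => if p.1 = e p.2 then 1 else 0
  have hM : (vecMulVec w (star w)).PosSemidef := posSemidef_vecMulVec_self_star w
  have hC := hΓ.1 _ _ hM
  obtain ⟨B, hB⟩ : ∃ B : Matrix (Fin (Fintype.card β) × β') (Fin (Fintype.card β) × β') ℂ,
      idTensor Γ (vecMulVec w (star w)) = Bᴴ * B := by
    exact CStarAlgebra.nonneg_iff_eq_star_mul_self.mp hC.nonneg
  have hsingle : ∀ i j p q, Γ (Matrix.single i j 1) p q =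
      ∑ s, star (B s (e i, p)) * B s (e j, q) := by
    intro i j p q
    have h := congrFun (congrFun hB (e i, p)) (e j, q)
    rw [Matrix.mul_apply] at h
    simp only [conjTranspose_apply] at h
    rw [← h]
    have hs : Matrix.single i j (1 : ℂ) =
        Matrix.of fun b b' => vecMulVec w (star w) (e i, b) (e j, b') := by
      ext b b'
      simp [vecMulVec_apply, w, Matrix.single_apply, ite_and]
      split_ifs <;> rfl
    rw [hs]
    rfl
  obtain ⟨V, hVa⟩ : ∃ V : Matrix ((Fin (Fintype.card β) × β') × β') β ℂ,
    ∀ s p i, V (s, p) i = star (B s (e i, p)) := ⟨Matrix.of fun sp i => star (B sp.1 (e i, sp.2)),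
      fun _ _ _ => rfl⟩
  have hK : ∀ X p q, Γ X p q = ∑ s, (V * X * Vᴴ) (s, p) (s, q) := by
    intro X p q
    have hX : X = ∑ i, ∑ j, X i j • Matrix.single i j (1 : ℂ) := by
      conv_lhs => rw [matrix_eq_sum_single X]
      simp [smul_single]
    conv_lhs => rw [hX]
    simp only [map_sum, map_smul, Matrix.sum_apply, Matrix.smul_apply, hsingle, smul_eq_mul,
      Finset.mul_sum]
    simp only [Matrix.mul_apply, conjTranspose_apply, hVa, star_star, Finset.sum_mul]
    rw [Finset.sum_comm]
    conv_rhs =>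
      rw [Finset.sum_comm]
      enter [2, j]
      rw [Finset.sum_comm]
    refine Finset.sum_congr rfl fun j _ => Finset.sum_congr rfl fun i _ =>
      Finset.sum_congr rfl fun s _ => ?_
    ring
  refine ⟨V, ?_, hK⟩
  have htr : ∀ X : Matrix β β ℂ, trace (Vᴴ * V * X) = trace (1 * X) := by
    intro X
    rw [Matrix.one_mul, ← hΓ.2 X, Matrix.mul_assoc, Matrix.trace_mul_comm]
    simp only [Matrix.trace, Matrix.diag_apply, hK]
    rw [Fintype.sum_prod_type_right]
  exact Matrix.ext_iff_trace_mul_right.mpr htr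

theorem nub_diag {ι β : Type*} [Fintype β] [DecidableEq β] (T : ι → Matrix β β ℂ)
    (hT : ∀ i, (T i)ᴴ = T i) (hc : ∀ i j, T i * T j = T j * T i) :
    ∃ (b : OrthonormalBasis β ℂ (EuclideanSpace ℂ β)) (c : ι → β → ℂ),
      ∀ i j, T i *ᵥ (b j).ofLp = c i j • (b j).ofLp := by
  classical
  let L : ι → EuclideanSpace ℂ β →ₗ[ℂ] EuclideanSpace ℂ β := fun i => (T i).toEuclideanLin
  have hL : ∀ i, (L i).IsSymmetric := fun i => isSymmetric_toEuclideanLin_iff.mpr (hT i)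
  have hC : Pairwise (Function.onFun Commute L) := by
    intro i j _
    show L i * L j = L j * L i
    ext v : 1
    simp [L, toLpLin_apply, hc i j]
  have hint := LinearMap.IsSymmetric.directSum_isInternal_of_pairwise_commute hL hC
  have hort := LinearMap.IsSymmetric.orthogonalFamily_iInf_eigenspaces hL
  set W : (ι → ℂ) → Submodule ℂ (EuclideanSpace ℂ β) :=
    fun γ => ⨅ j, Module.End.eigenspace (L j) (γ j) with hW
  have hfin : {γ | W γ ≠ ⊥}.Finite :=
    WellFoundedGT.finite_ne_bot_of_iSupIndep hint.submodule_iSupIndep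
  have : Fintype {γ // W γ ≠ ⊥} := hfin.fintype
  have hint' := DirectSum.isInternal_ne_bot_iff.mpr hint
  have hort' : OrthogonalFamily ℂ (fun i : {γ // W γ ≠ ⊥} => W i)
      fun i => (W i).subtypeₗᵢ := hort.comp Subtype.val_injective
  let b0 := hint'.subordinateOrthonormalBasis (n := Fintype.card β) (by simp) hort'
  refine ⟨b0.reindex (Fintype.equivFin β).symm, fun i j =>
    (hint'.subordinateOrthonormalBasisIndex (n := Fintype.card β) (by simp)
      (Fintype.equivFin β j) hort').1 i, ?_⟩
  intro i j
  have h := hint'.subordinateOrthonormalBasis_subordinate (n := Fintype.card β) (by simp)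
      (Fintype.equivFin β j) hort'
  have h2 := Module.End.mem_eigenspace_iff.mp ((Submodule.mem_iInf _).mp h i)
  have h3 := congrArg WithLp.ofLp h2
  simpa [L, toLpLin_apply, b0] using h3

/-! ### Blocks of a bipartite matrix -/

/-- A block of a bipartite matrix. -/
def nubBlk {α β : Type*} (ρ : Matrix (α × β) (α × β) ℂ) (a a' : α) : Matrix β β ℂ :=
  Matrix.of fun b b' => ρ (a, b) (a', b')

theorem nub_tr1 {ι β : Type*} [Fintype ι] [DecidableEq ι] [Fintype β] [DecidableEq β]
    (M : Matrix (ι × (β × β)) (ι × (β × β)) ℂ) (x : Matrix β β ℂ) :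
    trace (M * ((1 : Matrix ι ι ℂ) ⊗ₖ (x ⊗ₖ (1 : Matrix β β ℂ)))) =
      ∑ b, ∑ b', (∑ c, ∑ s, M (s, b, c) (s, b', c)) * x b' b := by
  simp only [Matrix.trace, Matrix.diag_apply, Matrix.mul_apply, kroneckerMap_apply,
    Fintype.sum_prod_type, Matrix.one_apply, ite_mul, one_mul, zero_mul, mul_ite, mul_one, mul_zero,
    Finset.sum_mul]
  simp only [Finset.sum_ite_eq', Finset.sum_ite_irrel, Finset.sum_const_zero, Finset.mem_univ,
    if_true]
  rw [Finset.sum_comm]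
  refine Finset.sum_congr rfl fun b _ => ?_
  rw [Finset.sum_comm]
  conv_rhs => rw [Finset.sum_comm]
  refine Finset.sum_congr rfl fun c _ => ?_
  rw [Finset.sum_comm]

theorem nub_tr2 {ι β : Type*} [Fintype ι] [DecidableEq ι] [Fintype β] [DecidableEq β]
    (M : Matrix (ι × (β × β)) (ι × (β × β)) ℂ) (x : Matrix β β ℂ) :
    trace (M * ((1 : Matrix ι ι ℂ) ⊗ₖ ((1 : Matrix β β ℂ) ⊗ₖ x))) =
      ∑ b, ∑ b', (∑ c, ∑ s, M (s, c, b) (s, c, b')) * x b' b := by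
  simp only [Matrix.trace, Matrix.diag_apply, Matrix.mul_apply, kroneckerMap_apply,
    Fintype.sum_prod_type, Matrix.one_apply, ite_mul, one_mul, zero_mul, mul_ite, mul_one, mul_zero,
    Finset.sum_mul]
  simp only [Finset.sum_ite_eq', Finset.sum_ite_irrel, Finset.sum_const_zero, Finset.mem_univ,
    if_true]
  conv_lhs => enter [2, s]; rw [Finset.sum_comm]
  rw [Finset.sum_comm]
  refine Finset.sum_congr rfl fun b _ => ?_
  rw [Finset.sum_comm]
  conv_rhs => rw [Finset.sum_comm]
  refine Finset.sum_congr rfl fun c _ => ?_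
  rw [Finset.sum_comm]

open scoped MatrixOrder in
theorem nub_support {α β : Type*} [Fintype α] [DecidableEq α] [Fintype β] [DecidableEq β]
    {ρ : Matrix (α × β) (α × β) ℂ} (hρ : ρ.PosSemidef) :
    (∑ a, nubBlk ρ a a).PosSemidef ∧
    ∀ Q, (∑ a, nubBlk ρ a a) * Q = 0 → ∀ a a', nubBlk ρ a a' * Q = 0 := by
  obtain ⟨B, hB⟩ : ∃ B : Matrix (α × β) (α × β) ℂ, ρ = Bᴴ * B :=
    CStarAlgebra.nonneg_iff_eq_star_mul_self.mp hρ.nonneg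
  let C : α → Matrix (α × β) β ℂ := fun a => B.submatrix id (fun b => (a, b))
  have hblk : ∀ a a', nubBlk ρ a a' = (C a)ᴴ * C a' := by
    intro a a'
    ext b b'
    show ρ (a, b) (a', b') = _
    rw [hB]
    rfl
  have hpsd : (∑ a, nubBlk ρ a a).PosSemidef := by
    refine posSemidef_sum _ fun a _ => ?_
    rw [hblk]
    exact posSemidef_conjTranspose_mul_self _
  refine ⟨hpsd, ?_⟩
  intro Q hQ a a'
  have h1 : ∑ a, trace ((C a * Q)ᴴ * (C a * Q)) = 0 := by
    have : trace (Qᴴ * ((∑ a, nubBlk ρ a a) * Q)) = 0 := by rw [hQ]; simp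
    rw [← this, Finset.sum_mul, Finset.mul_sum, trace_sum]
    refine Finset.sum_congr rfl fun a _ => ?_
    rw [hblk, conjTranspose_mul]
    simp only [Matrix.mul_assoc]
  have h2 := (Finset.sum_eq_zero_iff_of_nonneg (fun a _ =>
    (posSemidef_conjTranspose_mul_self (C a * Q)).trace_nonneg)).mp h1 a' (Finset.mem_univ _)
  rw [trace_conjTranspose_mul_self_eq_zero_iff] at h2
  rw [hblk, Matrix.mul_assoc, h2, Matrix.mul_zero]

theorem nub_blk_commute {α β : Type*} [Fintype α] [DecidableEq α] [Fintype β] [DecidableEq β]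
    (ρ : Matrix (α × β) (α × β) ℂ) (hρ : ρ.PosSemidef)
    (Γ : Matrix β β ℂ →ₗ[ℂ] Matrix (β × β) (β × β) ℂ) (hΓ : IsQuantumChannel Γ)
    (h1 : ptraceThird (idTensor Γ ρ) = ρ) (h2 : ptraceSecond (idTensor Γ ρ) = ρ) :
    ∃ (b : OrthonormalBasis β ℂ (EuclideanSpace ℂ β)) (c : α → α → β → ℂ),
      ∀ a a' j, nubBlk ρ a a' *ᵥ (b j).ofLp = c a a' j • (b j).ofLp := by
  obtain ⟨V, hV, hK⟩ := nub_kraus Γ hΓ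
  let π₁ : Matrix β β ℂ → Matrix ((Fin (Fintype.card β) × (β × β)) × (β × β))
      ((Fin (Fintype.card β) × (β × β)) × (β × β)) ℂ := fun x => 1 ⊗ₖ (x ⊗ₖ 1)
  let π₂ : Matrix β β ℂ → Matrix ((Fin (Fintype.card β) × (β × β)) × (β × β))
      ((Fin (Fintype.card β) × (β × β)) × (β × β)) ℂ := fun x => 1 ⊗ₖ (1 ⊗ₖ x)
  have f1 : ∀ a a' x, trace (V * nubBlk ρ a a' * Vᴴ * π₁ x) = trace (nubBlk ρ a a' * x) := by
    intro a a' x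
    rw [nub_tr1]
    simp only [← hK]
    have : ∀ b b', ∑ c, Γ (nubBlk ρ a a') (b, c) (b', c) = nubBlk ρ a a' b b' := fun b b' =>
      congrFun (congrFun h1 (a, b)) (a', b')
    simp only [this, Matrix.trace, Matrix.diag_apply, Matrix.mul_apply]
  have f2 : ∀ a a' x, trace (V * nubBlk ρ a a' * Vᴴ * π₂ x) = trace (nubBlk ρ a a' * x) := by
    intro a a' x
    rw [nub_tr2]
    simp only [← hK]
    have : ∀ b b', ∑ c, Γ (nubBlk ρ a a') (c, b) (c, b') = nubBlk ρ a a' b b' := fun b b' =>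
      congrFun (congrFun h2 (a, b)) (a', b')
    simp only [this, Matrix.trace, Matrix.diag_apply, Matrix.mul_apply]
  obtain ⟨hσ, hker⟩ := nub_support hρ
  have hct : ∀ a a', (nubBlk ρ a a')ᴴ = nubBlk ρ a' a := by
    intro a a'
    ext b b'
    exact hρ.1.apply _ _
  let T : α × α × Bool → Matrix β β ℂ := fun p =>
    bif p.2.2 then nubBlk ρ p.1 p.2.1 + nubBlk ρ p.2.1 p.1
    else Complex.I • (nubBlk ρ p.1 p.2.1 - nubBlk ρ p.2.1 p.1)
  have hT : ∀ p, (T p)ᴴ = T p := by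
    rintro ⟨a, a', _ | _⟩
    · simp only [T, cond_false, conjTranspose_smul, conjTranspose_sub, hct, Complex.star_def,
        Complex.conj_I]
      module
    · simp only [T, cond_true, conjTranspose_add, hct]
      rw [add_comm]
  have hTl : ∀ π : Matrix β β ℂ → Matrix ((Fin (Fintype.card β) × (β × β)) × (β × β))
      ((Fin (Fintype.card β) × (β × β)) × (β × β)) ℂ,
      (∀ a a' x, trace (V * nubBlk ρ a a' * Vᴴ * π x) = trace (nubBlk ρ a a' * x)) →
      ∀ p x, trace (V * T p * Vᴴ * π x) = trace (T p * x) := by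
    rintro π hπ ⟨a, a', _ | _⟩ x
    · simp only [T, cond_false, Matrix.mul_smul, Matrix.smul_mul, Matrix.mul_sub, Matrix.sub_mul,
        trace_smul, trace_sub, hπ]
    · simp only [T, cond_true, Matrix.mul_add, Matrix.add_mul, trace_add, hπ]
  have hcomm : ∀ p q, T p * T q = T q * T p := by
    intro p q
    refine nub_commute V π₁ π₂ ?_ ?_ ?_ ?_ ?_ hV hσ ?_ ?_ (Set.range T) ?_ ?_ ?_ ?_ _ ⟨p, rfl⟩ _
      ⟨q, rfl⟩
    · intro x y; simp only [π₁, ← mul_kronecker_mul, Matrix.mul_one]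
    · intro x; simp only [π₁, conjTranspose_kronecker, conjTranspose_one]
    · intro x y; simp only [π₂, ← mul_kronecker_mul, Matrix.mul_one]
    · intro x; simp only [π₂, conjTranspose_kronecker, conjTranspose_one]
    · intro x y; simp only [π₁, π₂, ← mul_kronecker_mul, Matrix.mul_one, Matrix.one_mul]
    · intro x
      simp only [Finset.mul_sum, Finset.sum_mul, Matrix.mul_sum, Matrix.sum_mul, trace_sum, f1]
    · intro x
      simp only [Finset.mul_sum, Finset.sum_mul, Matrix.mul_sum, Matrix.sum_mul, trace_sum, f2]
    · rintro _ ⟨p, rfl⟩; exact hT p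
    · rintro _ ⟨⟨a, a', _ | _⟩, rfl⟩ Q hQ
      · simp only [T, cond_false, Matrix.smul_mul, Matrix.sub_mul, hker Q hQ, sub_zero, smul_zero]
      · simp only [T, cond_true, Matrix.add_mul, hker Q hQ, add_zero]
    · rintro _ ⟨p, rfl⟩; exact hTl π₁ f1 p
    · rintro _ ⟨p, rfl⟩; exact hTl π₂ f2 p
  obtain ⟨b, c, hbc⟩ := nub_diag T hT hcomm
  refine ⟨b, fun a a' j => (1 / 2 : ℂ) * (c (a, a', true) j - Complex.I * c (a, a', false) j), ?_⟩
  intro a a' j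
  have e : nubBlk ρ a a' = (1 / 2 : ℂ) • (T (a, a', true) - Complex.I • T (a, a', false)) := by
    simp only [T, cond_true, cond_false, smul_smul, Complex.I_mul_I]
    module
  rw [e, Matrix.smul_mulVec, Matrix.sub_mulVec, Matrix.smul_mulVec, hbc, hbc]
  module

theorem nub_resolution {β : Type*} [Fintype β] [DecidableEq β] (bv : β → β → ℂ)
    (hb : ∀ j j', star (bv j) ⬝ᵥ bv j' = if j = j' then 1 else 0) :
    ∑ j, vecMulVec (bv j) (star (bv j)) = 1 := by
  let U : Matrix β β ℂ := Matrix.of fun i j => bv j i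
  have h : Uᴴ * U = 1 := by
    ext j j'
    rw [Matrix.one_apply, ← hb j j']
    rfl
  have h' : U * Uᴴ = 1 := mul_eq_one_comm.mp h
  rw [← h']
  ext i i'
  simp [Matrix.sum_apply, vecMulVec_apply, Matrix.mul_apply, U]

theorem nub_forward {α β : Type*} [Fintype α] [DecidableEq α] [Fintype β] [DecidableEq β]
    (ρ : Matrix (α × β) (α × β) ℂ) (hρ : IsDensityMatrix ρ)
    (b : OrthonormalBasis β ℂ (EuclideanSpace ℂ β)) (c : α → α → β → ℂ)
    (hbc : ∀ a a' j, nubBlk ρ a a' *ᵥ (b j).ofLp = c a a' j • (b j).ofLp) : ClassicalOnB ρ := by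
  have hb : ∀ j j', star (b j).ofLp ⬝ᵥ (b j').ofLp = if j = j' then 1 else 0 := by
    intro j j'
    have := orthonormal_iff_ite.mp b.orthonormal j j'
    rw [← this, EuclideanSpace.inner_eq_star_dotProduct, dotProduct_comm]
  have hres := nub_resolution (fun j => (b j).ofLp) hb
  let t : β → Matrix α α ℂ := fun j => Matrix.of fun a a' => c a a' j
  have hblk : ∀ a a', nubBlk ρ a a' =
      ∑ j, c a a' j • vecMulVec (b j).ofLp (star (b j).ofLp) := by
    intro a a'
    conv_lhs => rw [← Matrix.mul_one (nubBlk ρ a a'), ← hres, Finset.mul_sum]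
    refine Finset.sum_congr rfl fun j _ => ?_
    rw [mul_vecMulVec, hbc, smul_vecMulVec]
  have hsum : ρ = ∑ j, t j ⊗ₖ vecMulVec (b j).ofLp (star (b j).ofLp) := by
    ext ⟨a, x⟩ ⟨a', x'⟩
    have := congrFun (congrFun (hblk a a') x) x'
    simp only [Matrix.sum_apply] at this ⊢
    exact this
  have htpsd : ∀ j, (t j).PosSemidef := by
    intro j
    let B : Matrix (α × β) α ℂ := Matrix.of fun p a => if p.1 = a then (b j).ofLp p.2 else 0
    have : t j = Bᴴ * ρ * B := by
      ext a a'
      have h := congrArg (fun v => star (b j).ofLp ⬝ᵥ v) (hbc a a' j)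
      simp only [dotProduct_smul, hb, if_true, smul_eq_mul, mul_one] at h
      show c a a' j = _
      rw [← h]
      simp [Matrix.mul_apply, dotProduct, mulVec, nubBlk, B, Fintype.sum_prod_type,
        Finset.sum_mul, Finset.mul_sum, apply_ite star]
      rw [Finset.sum_comm]
      simp [mul_assoc]
    rw [this]
    exact hρ.1.conjTranspose_mul_mul_same B
  have htr : ∑ j, (t j).trace = 1 := by
    rw [← hρ.2, hsum, trace_sum]
    refine Finset.sum_congr rfl fun j _ => ?_
    rw [trace_kronecker, trace_vecMulVec, dotProduct_comm, hb]
    simp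
  have hre : ∀ j, (((t j).trace.re : ℝ) : ℂ) = (t j).trace := fun j =>
    (Complex.eq_re_of_ofReal_le (r := 0) (by simpa using (htpsd j).trace_nonneg)).symm
  have hne : Nonempty α := by
    by_contra hne
    rw [not_nonempty_iff] at hne
    have := hρ.2
    simp [Matrix.trace] at this
  obtain ⟨a0⟩ := hne
  classical
  refine ⟨fun j => (t j).trace.re, fun j => if (t j).trace = 0 then
    vecMulVec (Pi.single a0 1) (star (Pi.single a0 1)) else ((t j).trace)⁻¹ • t j,
    fun j => (b j).ofLp, ?_, ?_, ?_, hb, ?_⟩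
  · intro j
    exact (Complex.le_def.mp (htpsd j).trace_nonneg).1
  · have := congrArg Complex.re htr
    simpa using this
  · intro j
    dsimp only
    split_ifs with h0
    · refine ⟨posSemidef_vecMulVec_self_star _, ?_⟩
      simp [trace_vecMulVec]
    · refine ⟨(htpsd j).smul ?_, ?_⟩
      · exact inv_nonneg.mpr (htpsd j).trace_nonneg
      · rw [trace_smul, smul_eq_mul, inv_mul_cancel₀ h0]
  · conv_lhs => rw [hsum]
    refine Finset.sum_congr rfl fun j _ => ?_
    dsimp only
    rw [hre]
    split_ifs with h0
    · rw [(htpsd j).trace_eq_zero_iff.mp h0]; simp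
    · rw [smul_kronecker, smul_smul, mul_inv_cancel₀ h0, one_smul]

/-! ### The measure-and-prepare channel -/

/-- Measure in the basis `bv` and prepare two copies of the outcome. -/
noncomputable def nubChan {β : Type*} [Fintype β] (bv : β → β → ℂ) :
    Matrix β β ℂ →ₗ[ℂ] Matrix (β × β) (β × β) ℂ where
  toFun X := ∑ j, (star (bv j) ⬝ᵥ (X *ᵥ bv j)) •
    (vecMulVec (bv j) (star (bv j)) ⊗ₖ vecMulVec (bv j) (star (bv j)))
  map_add' X Y := by
    simp only [Matrix.add_mulVec, dotProduct_add, add_smul, Finset.sum_add_distrib]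
  map_smul' c X := by
    simp only [Matrix.smul_mulVec, dotProduct_smul, smul_eq_mul, mul_smul, Finset.smul_sum,
      RingHom.id_apply]

theorem nubChan_apply {β : Type*} [Fintype β] (bv : β → β → ℂ) (X : Matrix β β ℂ) :
    nubChan bv X = ∑ j, (star (bv j) ⬝ᵥ (X *ᵥ bv j)) •
    (vecMulVec (bv j) (star (bv j)) ⊗ₖ vecMulVec (bv j) (star (bv j))) := rfl

theorem nubChan_channel {β : Type*} [Fintype β] [DecidableEq β] (bv : β → β → ℂ)
    (hb : ∀ j j', star (bv j) ⬝ᵥ bv j' = if j = j' then 1 else 0) :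
    IsQuantumChannel (nubChan bv) := by
  constructor
  · intro k M hM
    let W : β → Matrix (Fin k × β) (Fin k) ℂ := fun j =>
      Matrix.of fun p a => if p.1 = a then bv j p.2 else 0
    have h : idTensor (nubChan bv) M = ∑ j, ((W j)ᴴ * M * W j) ⊗ₖ
        (vecMulVec (bv j) (star (bv j)) ⊗ₖ vecMulVec (bv j) (star (bv j))) := by
      ext ⟨a, x⟩ ⟨a', x'⟩
      show nubChan bv (Matrix.of fun b b' => M (a, b) (a', b')) x x' = _
      rw [nubChan_apply, Matrix.sum_apply, Matrix.sum_apply]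
      refine Finset.sum_congr rfl fun j _ => ?_
      rw [Matrix.smul_apply, kroneckerMap_apply _ (_ * _), smul_eq_mul]
      congr 1
      simp [Matrix.mul_apply, dotProduct, mulVec, W, Fintype.sum_prod_type,
        Finset.sum_mul, Finset.mul_sum, apply_ite star]
      rw [Finset.sum_comm]
      simp [mul_assoc]
    rw [h]
    refine posSemidef_sum _ fun j _ => ?_
    exact (hM.conjTranspose_mul_mul_same (W j)).kronecker
      ((posSemidef_vecMulVec_self_star _).kronecker (posSemidef_vecMulVec_self_star _))
  · intro X
    rw [nubChan_apply, trace_sum]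
    have : ∀ j, ((star (bv j) ⬝ᵥ (X *ᵥ bv j)) • (vecMulVec (bv j) (star (bv j)) ⊗ₖ
        vecMulVec (bv j) (star (bv j)))).trace = trace (X * vecMulVec (bv j) (star (bv j))) := by
      intro j
      rw [trace_smul, trace_kronecker, trace_vecMulVec, mul_vecMulVec, trace_vecMulVec,
        dotProduct_comm (bv j), hb, dotProduct_comm (X *ᵥ bv j)]
      simp
    simp only [this]
    rw [← trace_sum, ← Finset.mul_sum, nub_resolution bv hb, Matrix.mul_one]

theorem nub_backward {α β : Type*} [Fintype α] [DecidableEq α] [Fintype β] [DecidableEq β]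
    (ρ : Matrix (α × β) (α × β) ℂ) (h : ClassicalOnB ρ) :
    ∃ Γ : Matrix β β ℂ →ₗ[ℂ] Matrix (β × β) (β × β) ℂ, IsQuantumChannel Γ ∧
        ptraceThird (idTensor Γ ρ) = ρ ∧ ptraceSecond (idTensor Γ ρ) = ρ := by
  obtain ⟨p, τ, bv, -, -, -, hb, hρ⟩ := h
  have hblk : ∀ a a', nubBlk ρ a a' =
      ∑ j, ((p j : ℂ) * τ j a a') • vecMulVec (bv j) (star (bv j)) := by
    intro a a'
    ext b b'
    show ρ (a, b) (a', b') = _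
    rw [hρ]
    simp only [Matrix.sum_apply, Matrix.smul_apply, kroneckerMap_apply, smul_eq_mul, mul_assoc]
  have hP : ∀ j, nubChan bv (vecMulVec (bv j) (star (bv j))) =
      vecMulVec (bv j) (star (bv j)) ⊗ₖ vecMulVec (bv j) (star (bv j)) := by
    intro j
    rw [nubChan_apply, Finset.sum_eq_single j]
    · simp [vecMulVec_mulVec, hb]
    · intro i _ hij
      simp [vecMulVec_mulVec, hb, hij.symm]
    · simp
  have hG : ∀ a a', nubChan bv (nubBlk ρ a a') = ∑ j, ((p j : ℂ) * τ j a a') •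
      (vecMulVec (bv j) (star (bv j)) ⊗ₖ vecMulVec (bv j) (star (bv j))) := by
    intro a a'
    rw [hblk, map_sum]
    simp only [map_smul, hP]
  have htr : ∀ j, ∑ c, vecMulVec (bv j) (star (bv j)) c c = 1 := by
    intro j
    have : trace (vecMulVec (bv j) (star (bv j))) = 1 := by
      rw [trace_vecMulVec, dotProduct_comm, hb]; simp
    exact this
  refine ⟨nubChan bv, nubChan_channel bv hb, ?_, ?_⟩
  · ext ⟨a, b⟩ ⟨a', b'⟩
    show ∑ c, nubChan bv (nubBlk ρ a a') (b, c) (b', c) = nubBlk ρ a a' b b'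
    rw [hG, hblk]
    simp only [Matrix.sum_apply, Matrix.smul_apply, kroneckerMap_apply, smul_eq_mul]
    rw [Finset.sum_comm]
    simp only [← Finset.mul_sum, htr, mul_one]
  · ext ⟨a, b⟩ ⟨a', b'⟩
    show ∑ c, nubChan bv (nubBlk ρ a a') (c, b) (c, b') = nubBlk ρ a a' b b'
    rw [hG, hblk]
    simp only [Matrix.sum_apply, Matrix.smul_apply, kroneckerMap_apply, smul_eq_mul]
    rw [Finset.sum_comm]
    simp only [← Finset.mul_sum, ← Finset.sum_mul, htr, one_mul]

/-- **No-unilocal-broadcasting theorem.** A bipartite state `ρ_{AB}` can be locally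
broadcast on `B` (there is a channel `Γ : B → B₁B₂` with both `ABᵢ` marginals of
`(id_A ⊗ Γ)[ρ_{AB}]` equal to `ρ_{AB}`) if and only if `ρ_{AB}` is classical on `B`. -/
theorem no_unilocal_broadcasting {α β : Type*} [Fintype α] [DecidableEq α]
    [Fintype β] [DecidableEq β]
    (ρ : Matrix (α × β) (α × β) ℂ) (hρ : IsDensityMatrix ρ) :
    (∃ Γ : Matrix β β ℂ →ₗ[ℂ] Matrix (β × β) (β × β) ℂ, IsQuantumChannel Γ ∧
        ptraceThird (idTensor Γ ρ) = ρ ∧ ptraceSecond (idTensor Γ ρ) = ρ) ↔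
      ClassicalOnB ρ := by
  constructor
  · rintro ⟨Γ, hΓ, h1, h2⟩
    obtain ⟨b, c, hbc⟩ := nub_blk_commute ρ hρ.1 Γ hΓ h1 h2
    exact nub_forward ρ hρ b c hbc
  · exact nub_backward ρ
end

section
/- Let ρ_{AB} be a bipartite density matrix, {E_i^A} a POVM on A with p_i = Tr((E_i^A ⊗ 1_B) ρ_{AB}) > 0 and conditional states ρ_i^B = (1/p_i) Tr_A((E_i^A ⊗ 1_B) ρ_{AB}). If a channel Γ: B → B₁B₂ locally broadcasts ρ_{AB} on B (i.e., both marginals Tr_{B2}((id_A ⊗ Γ)[ρ_{AB}]) and Tr_{B1}((id_A ⊗ Γ)[ρ_{AB}]) equal ρ_{AB}), then Γ broadcasts each conditional state: Tr_{B2}(Γ[ρ_i^B]) = ρ_i^B and Tr_{B1}(Γ[ρ_i^B]) = ρ_i^B for every i. -/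
open Matrix Kronecker ComplexOrder

/-- If a channel `Γ : B → B₁B₂` locally broadcasts `ρ_{AB}` on `B`, then it broadcasts
every conditional state `ρᵢ^B = pᵢ⁻¹ Tr_A((Eᵢ ⊗ 𝟙)ρ_{AB})` induced by a POVM `{Eᵢ}` on `A`
with `pᵢ = Tr((Eᵢ ⊗ 𝟙)ρ_{AB}) > 0`. -/
theorem broadcasts_conditional_states {α β : Type*} [Fintype α] [DecidableEq α]
    [Fintype β] [DecidableEq β]
    (ρ : Matrix (α × β) (α × β) ℂ) (hρ : IsDensityMatrix ρ)
    {k : ℕ} (E : Fin k → Matrix α α ℂ)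
    (hE : ∀ i, (E i).PosSemidef) (hEsum : ∑ i, E i = 1)
    (hp : ∀ i, 0 < ((E i ⊗ₖ (1 : Matrix β β ℂ)) * ρ).trace)
    (Γ : Matrix β β ℂ →ₗ[ℂ] Matrix (β × β) (β × β) ℂ) (hΓ : IsQuantumChannel Γ)
    (hb₁ : ptraceThird (idTensor Γ ρ) = ρ) (hb₂ : ptraceSecond (idTensor Γ ρ) = ρ) :
    ∀ i,
      ptraceRight (Γ ((((E i ⊗ₖ (1 : Matrix β β ℂ)) * ρ).trace)⁻¹ •
          ptraceLeft ((E i ⊗ₖ (1 : Matrix β β ℂ)) * ρ))) =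
        (((E i ⊗ₖ (1 : Matrix β β ℂ)) * ρ).trace)⁻¹ •
          ptraceLeft ((E i ⊗ₖ (1 : Matrix β β ℂ)) * ρ) ∧
      ptraceLeft (Γ ((((E i ⊗ₖ (1 : Matrix β β ℂ)) * ρ).trace)⁻¹ •
          ptraceLeft ((E i ⊗ₖ (1 : Matrix β β ℂ)) * ρ))) =
        (((E i ⊗ₖ (1 : Matrix β β ℂ)) * ρ).trace)⁻¹ •
          ptraceLeft ((E i ⊗ₖ (1 : Matrix β β ℂ)) * ρ) := by
  intro i
  have key : ptraceLeft ((E i ⊗ₖ (1 : Matrix β β ℂ)) * ρ) =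
      ∑ a, ∑ a', E i a a' • (Matrix.of fun b b' => ρ (a', b) (a, b') : Matrix β β ℂ) := by
    ext b b'
    simp [ptraceLeft, Matrix.mul_apply, Matrix.sum_apply, Fintype.sum_prod_type,
      Matrix.one_apply]
  have h1 : ∀ a a' c c', ∑ d, Γ (Matrix.of fun b b' => ρ (a, b) (a', b')) (c, d) (c', d) =
      ρ (a, c) (a', c') := fun a a' c c' => congrFun (congrFun hb₁ (a, c)) (a', c')
  have h2 : ∀ a a' c c', ∑ d, Γ (Matrix.of fun b b' => ρ (a, b) (a', b')) (d, c) (d, c') =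
      ρ (a, c) (a', c') := fun a a' c c' => congrFun (congrFun hb₂ (a, c)) (a', c')
  rw [key]
  constructor
  · ext c c'
    simp only [ptraceRight, map_smul, map_sum, Matrix.of_apply, Matrix.smul_apply,
      Matrix.sum_apply, smul_eq_mul, ← Finset.mul_sum]
    congr 1
    rw [Finset.sum_comm]
    refine Finset.sum_congr rfl fun a _ => ?_
    rw [Finset.sum_comm]
    refine Finset.sum_congr rfl fun a' _ => ?_
    rw [← Finset.mul_sum, h1]
  · ext c c'
    simp only [ptraceLeft, map_smul, map_sum, Matrix.of_apply, Matrix.smul_apply,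
      Matrix.sum_apply, smul_eq_mul, ← Finset.mul_sum]
    congr 1
    rw [Finset.sum_comm]
    refine Finset.sum_congr rfl fun a _ => ?_
    rw [Finset.sum_comm]
    refine Finset.sum_congr rfl fun a' _ => ?_
    rw [← Finset.mul_sum, h2]
end
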